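/- arXiv:2510.03408 — 2 statements merged into one kernel-verified Lean document; each statement's English description precedes it below -/
import Mathlib

section
/- Let n ≥ 1, α ∈ (0,1), T > 0, let c : ℝⁿ → ℝ be smooth with c(x) ≥ c₀ for some constant c₀ > 0, and let a : ℝⁿ → ℝ be smooth with a ≥ 0. Let u : ℝ × ℝⁿ → ℝ be smooth, suppose there is a compact set K ⊆ ℝⁿ with supp u(t,·) ⊆ K for all t ∈ [0,T], and suppose u satisfies the fractional wave equation ∂_t² u − c(x)² Δu + a(x) ∂_t^α u = 0 on (0,T) × ℝⁿ. Then for every t ∈ [0,T], E(t) = E(0) − 2 ∫₀^t ∫_{ℝⁿ} a(x) c(x)^{−2} ∂_s u(s,x) · ∂_s^α u(s,x) dx ds. -/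
open MeasureTheory Set

/-- Partial derivative `∂f/∂xᵢ` of `f : ℝⁿ → ℝ` at `x`. -/
noncomputable def partialD {n : ℕ} (f : (Fin n → ℝ) → ℝ) (i : Fin n) (x : Fin n → ℝ) : ℝ :=
  deriv (fun s => f (Function.update x i s)) (x i)

/-- Second partial derivative `∂²f/∂xᵢ²` of `f : ℝⁿ → ℝ` at `x`. -/
noncomputable def secondPartial {n : ℕ} (f : (Fin n → ℝ) → ℝ) (i : Fin n) (x : Fin n → ℝ) : ℝ :=
  deriv (fun s => deriv (fun r => f (Function.update x i r)) s) (x i)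

/-- The Laplacian of `f : ℝⁿ → ℝ`, i.e. the sum of the second partial derivatives. -/
noncomputable def laplacian {n : ℕ} (f : (Fin n → ℝ) → ℝ) (x : Fin n → ℝ) : ℝ :=
  ∑ i, secondPartial f i x

/-- The Caputo fractional derivative of order `α`:
`∂_t^α f(t) = (1/Γ(1-α)) ∫₀^t (t-s)^{-α} f'(s) ds`. -/
noncomputable def caputo (α : ℝ) (f : ℝ → ℝ) (t : ℝ) : ℝ :=
  (1 / Real.Gamma (1 - α)) * ∫ s in (0:ℝ)..t, (t - s) ^ (-α) * deriv f s

/-- The energy `E(t) = ∫ (c⁻² |∂_t u|² + |∇ₓ u|²) dx`. -/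
noncomputable def energy {n : ℕ} (c : (Fin n → ℝ) → ℝ) (u : ℝ → (Fin n → ℝ) → ℝ) (t : ℝ) : ℝ :=
  ∫ x, (((c x) ^ 2)⁻¹ * (deriv (fun s => u s x) t) ^ 2 + ∑ i, (partialD (u t) i x) ^ 2)

/-!
The time derivative of the energy density `c⁻²|∂ₜu|² + |∇u|²` is `2(c⁻² ∂ₜu ∂ₜ²u + ∇u · ∇∂ₜu)`.
Integrating over space and applying Green's identity to the second term turns this into
`2 ∫ c⁻² ∂ₜu (∂ₜ²u - c²Δu) dx`, and the wave equation replaces the bracket by minus the damping.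
For each `x` the density is recovered from its time derivative by the fundamental theorem of
calculus, and Fubini exchanges the time and space integrals.
-/

open Function (uncurry)

section Integration

variable {X E : Type*} [TopologicalSpace X] [MeasurableSpace X] [OpensMeasurableSpace X]
  {μ : Measure X} [IsFiniteMeasureOnCompacts μ] {K : Set X}

lemma integrable_mul_of_hasCompactSupport {f g : X → ℝ} (hf : Continuous f) (hg : Continuous g)
    (hgc : HasCompactSupport g) : Integrable (fun x => f x * g x) μ :=
  (hf.mul hg).integrable_of_hasCompactSupport hgc.mul_left

variable [T2Space X] [SFinite μ] [NormedAddCommGroup E] {a b : ℝ}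

lemma integrable_uncurry_uIoc_prod {f : ℝ → X → E} (hab : a ≤ b) (hK : IsCompact K)
    (hf : Continuous (uncurry f)) (h0 : ∀ s ∈ Icc a b, ∀ x ∉ K, f s x = 0) :
    Integrable (uncurry f) ((volume.restrict (uIoc a b)).prod μ) := by
  have hcompact : IntegrableOn (uncurry f) (Icc a b ×ˢ K) (volume.prod μ) :=
    hf.continuousOn.integrableOn_compact (isCompact_Icc.prod hK)
  have hstrip : IntegrableOn (uncurry f) (Icc a b ×ˢ univ) (volume.prod μ) :=
    hcompact.of_forall_sdiff_eq_zero (measurableSet_Icc.prod MeasurableSet.univ)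
      fun p hp => h0 p.1 hp.1.1 p.2 fun hpK => hp.2 ⟨hp.1.1, hpK⟩
  rw [← μ.restrict_univ, Measure.prod_restrict, uIoc_of_le hab]
  exact hstrip.mono_set (prod_mono Ioc_subset_Icc_self subset_rfl)

theorem integral_sub_integral_of_hasDerivAt [NormedSpace ℝ E] [CompleteSpace E]
    {f f' : ℝ → X → E} (hab : a ≤ b) (hK : IsCompact K)
    (hf : Continuous (uncurry f)) (hf' : Continuous (uncurry f'))
    (hderiv : ∀ s x, HasDerivAt (fun r => f r x) (f' s x) s)
    (hf0 : ∀ s ∈ Icc a b, ∀ x ∉ K, f s x = 0) (hf'0 : ∀ s ∈ Icc a b, ∀ x ∉ K, f' s x = 0) :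
    ∫ x, f b x ∂μ - ∫ x, f a x ∂μ = ∫ s in a..b, ∫ x, f' s x ∂μ := by
  have hint (s : ℝ) (hs : s ∈ Icc a b) : Integrable (f s) μ :=
    (hf.uncurry_left s).integrable_of_hasCompactSupport (.intro hK (hf0 s hs))
  have hftc (x : X) : ∫ s in a..b, f' s x = f b x - f a x :=
    intervalIntegral.integral_eq_sub_of_hasDerivAt (fun s _ => hderiv s x)
      ((hf'.uncurry_right x).intervalIntegrable a b)
  rw [intervalIntegral_integral_swap (integrable_uncurry_uIoc_prod hab hK hf' hf'0),
    ← integral_sub (hint b (right_mem_Icc.mpr hab)) (hint a (left_mem_Icc.mpr hab))]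
  simp only [hftc]

end Integration

section Calculus

variable {E F : Type*} [NormedAddCommGroup E] [NormedSpace ℝ E]
  [NormedAddCommGroup F] [NormedSpace ℝ F]

lemma fderiv_fderiv_apply_comm {f : E → F} (hf : ContDiff ℝ 2 f) (v w p : E) :
    fderiv ℝ (fun q => fderiv ℝ f q v) p w = fderiv ℝ (fun q => fderiv ℝ f q w) p v := by
  have hdiff : DifferentiableAt ℝ (fderiv ℝ f) p :=
    (hf.fderiv_right (m := 1) le_rfl).differentiable one_ne_zero p
  have hsymm : IsSymmSndFDerivAt ℝ f p := hf.contDiffAt.isSymmSndFDerivAt (by simp)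
  have happly (v w : E) :
      fderiv ℝ (fun q => fderiv ℝ f q v) p w = fderiv ℝ (fderiv ℝ f) p w v := by
    simp [fderiv_clm_apply hdiff (differentiableAt_const v)]
  rw [happly, happly, hsymm.eq]

lemma eqOn_deriv_of_uniqueDiffOn {f g : ℝ → F} {s : Set ℝ} (hs : UniqueDiffOn ℝ s)
    (hf : Differentiable ℝ f) (hg : Differentiable ℝ g) (hfg : EqOn f g s) :
    EqOn (deriv f) (deriv g) s := fun t ht => by
  rw [← (hf t).derivWithin (hs t ht), ← (hg t).derivWithin (hs t ht),
    derivWithin_congr hfg (hfg ht)]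

/-- The time derivative `∂ₜu` of a time-dependent field `u`, again as a time-dependent field, so
that it can be iterated and restricted to time slices. -/
noncomputable def timeDeriv (u : ℝ → E → F) (t : ℝ) (x : E) : F :=
  deriv (fun s => u s x) t

lemma hasDerivAt_timeDeriv {u : ℝ → E → F} (hu : Differentiable ℝ (uncurry u)) (t : ℝ) (x : E) :
    HasDerivAt (fun s => u s x) (timeDeriv u t x) t :=
  (hu.comp (differentiable_id.prodMk (differentiable_const x)) t).hasDerivAt

lemma uncurry_timeDeriv {u : ℝ → E → F} (hu : Differentiable ℝ (uncurry u)) :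
    uncurry (timeDeriv u) = fun p => fderiv ℝ (uncurry u) p (1, 0) := by
  ext ⟨t, x⟩
  exact ((hu (t, x)).hasFDerivAt.comp_hasDerivAt t
    ((hasDerivAt_id t).prodMk (hasDerivAt_const t x))).deriv

lemma contDiff_timeDeriv {u : ℝ → E → F} {m : WithTop ℕ∞} (hu : ContDiff ℝ (m + 1) (uncurry u)) :
    ContDiff ℝ m (uncurry (timeDeriv u)) := by
  rw [uncurry_timeDeriv (hu.differentiable (by simp))]
  exact (hu.fderiv_right le_rfl).clm_apply contDiff_const

end Calculus

section PartialDerivatives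

variable {n : ℕ}

lemma partialD_eq_fderiv {f : (Fin n → ℝ) → ℝ} {x : Fin n → ℝ} (hf : DifferentiableAt ℝ f x)
    (i : Fin n) : partialD f i x = fderiv ℝ f x (Pi.single i 1) := by
  have hfx : HasFDerivAt f (fderiv ℝ f x) (Function.update x i (x i)) := by
    rw [Function.update_eq_self]
    exact hf.hasFDerivAt
  exact (hfx.comp_hasDerivAt (x i) (hasDerivAt_update x i (x i))).deriv

lemma contDiff_partialD {f : (Fin n → ℝ) → ℝ} {m : WithTop ℕ∞} (hf : ContDiff ℝ (m + 1) f)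
    (i : Fin n) : ContDiff ℝ m (partialD f i) := by
  have hfderiv : partialD f i = fun x => fderiv ℝ f x (Pi.single i 1) :=
    funext fun x => partialD_eq_fderiv (hf.differentiable (by simp) x) i
  rw [hfderiv]
  exact (hf.fderiv_right le_rfl).clm_apply contDiff_const

lemma support_partialD_subset (f : (Fin n → ℝ) → ℝ) (i : Fin n) :
    Function.support (partialD f i) ⊆ tsupport f := by
  refine fun x hx => by_contra fun hxf => hx ?_
  have hupdate : Filter.Tendsto (Function.update x i) (nhds (x i)) (nhds x) := by
    simpa using (hasDerivAt_update x i (x i)).continuousAt.tendsto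
  have hzero := (notMem_tsupport_iff_eventuallyEq.mp hxf).comp_tendsto hupdate
  exact hzero.deriv_eq.trans (deriv_const (x i) 0)

lemma laplacian_eq_sum_partialD (f : (Fin n → ℝ) → ℝ) (x : Fin n → ℝ) :
    laplacian f x = ∑ i, partialD (partialD f i) i x := by
  simp [laplacian, secondPartial, partialD]

lemma continuous_laplacian {f : (Fin n → ℝ) → ℝ} (hf : ContDiff ℝ 2 f) :
    Continuous (laplacian f) := by
  simp only [funext (laplacian_eq_sum_partialD f)]
  exact continuous_finsetSum _ fun i _ =>
    (contDiff_partialD (m := 0) (contDiff_partialD (m := 1) hf i) i).continuous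

lemma integrable_mul_partialD {f g : (Fin n → ℝ) → ℝ} (hf : Continuous f) (hg : ContDiff ℝ 1 g)
    (hgc : HasCompactSupport g) (i : Fin n) : Integrable fun x => f x * partialD g i x :=
  integrable_mul_of_hasCompactSupport hf (contDiff_partialD (m := 0) hg i).continuous
    (hgc.mono' (support_partialD_subset g i))

lemma integral_mul_partialD {f g : (Fin n → ℝ) → ℝ} (hf : ContDiff ℝ 1 f) (hg : ContDiff ℝ 1 g)
    (hgc : HasCompactSupport g) (i : Fin n) :
    ∫ x, f x * partialD g i x = -∫ x, partialD f i x * g x := by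
  have hfd := hf.differentiable one_ne_zero
  have hgd := hg.differentiable one_ne_zero
  have hfg' := integrable_mul_partialD hf.continuous hg hgc i
  have hf'g := integrable_mul_of_hasCompactSupport (μ := volume)
    (contDiff_partialD (m := 0) hf i).continuous hg.continuous hgc
  simp only [partialD_eq_fderiv (hfd _), partialD_eq_fderiv (hgd _)] at hf'g hfg' ⊢
  exact integral_mul_fderiv_eq_neg_fderiv_mul_of_integrable hf'g hfg'
    (integrable_mul_of_hasCompactSupport hf.continuous hg.continuous hgc)
    (fun x _ => hfd x) fun x _ => hgd x

theorem integral_sum_partialD_mul_partialD {f g : (Fin n → ℝ) → ℝ} (hf : ContDiff ℝ 2 f)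
    (hg : ContDiff ℝ 1 g) (hgc : HasCompactSupport g) :
    ∫ x, ∑ i, partialD f i x * partialD g i x = -∫ x, laplacian f x * g x := by
  have hf' (i : Fin n) : ContDiff ℝ 1 (partialD f i) := contDiff_partialD (m := 1) hf i
  have hf'' (i : Fin n) := (contDiff_partialD (m := 0) (hf' i) i).continuous
  simp only [laplacian_eq_sum_partialD, Finset.sum_mul]
  rw [integral_finsetSum _ fun i _ => integrable_mul_partialD (hf' i).continuous hg hgc i,
    integral_finsetSum _ fun i _ => integrable_mul_of_hasCompactSupport (hf'' i) hg.continuous hgc,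
    ← Finset.sum_neg_distrib]
  exact Finset.sum_congr rfl fun i _ => integral_mul_partialD (hf' i) hg hgc i

variable {u : ℝ → (Fin n → ℝ) → ℝ}

lemma uncurry_partialD (hu : Differentiable ℝ (uncurry u)) (i : Fin n) :
    uncurry (fun t => partialD (u t) i) = fun p => fderiv ℝ (uncurry u) p (0, Pi.single i 1) := by
  ext ⟨t, x⟩
  have hslice : HasFDerivAt (u t) _ x :=
    (hu (t, x)).hasFDerivAt.comp x (hasFDerivAt_prodMk_right t x)
  simp [partialD_eq_fderiv hslice.differentiableAt, hslice.fderiv]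

lemma contDiff_uncurry_partialD {m : WithTop ℕ∞} (hu : ContDiff ℝ (m + 1) (uncurry u))
    (i : Fin n) : ContDiff ℝ m (uncurry fun t => partialD (u t) i) := by
  rw [uncurry_partialD (hu.differentiable (by simp))]
  exact (hu.fderiv_right le_rfl).clm_apply contDiff_const

lemma timeDeriv_partialD (hu : ContDiff ℝ 2 (uncurry u)) (i : Fin n) (t : ℝ) (x : Fin n → ℝ) :
    timeDeriv (fun s => partialD (u s) i) t x = partialD (timeDeriv u t) i x := by
  have hu' := hu.differentiable two_ne_zero
  have hpartial := (contDiff_uncurry_partialD (m := 1) hu i).differentiable one_ne_zero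
  have htime := (contDiff_timeDeriv (m := 1) hu).differentiable one_ne_zero
  have hleft := congrFun (uncurry_timeDeriv hpartial) (t, x)
  have hright := congrFun (uncurry_partialD htime i) (t, x)
  rw [uncurry_partialD hu'] at hleft
  rw [uncurry_timeDeriv hu'] at hright
  exact hleft.trans ((fderiv_fderiv_apply_comm hu _ _ _).trans hright.symm)

end PartialDerivatives

section Energy

variable {n : ℕ} {c : (Fin n → ℝ) → ℝ} {u : ℝ → (Fin n → ℝ) → ℝ}

/-- The energy density `c⁻²|∂ₜu|² + |∇u|²` at time `t`, the integrand of `energy`. -/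
noncomputable def energyDensity (c : (Fin n → ℝ) → ℝ) (u : ℝ → (Fin n → ℝ) → ℝ) (t : ℝ)
    (x : Fin n → ℝ) : ℝ :=
  (c x ^ 2)⁻¹ * timeDeriv u t x ^ 2 + ∑ i, partialD (u t) i x ^ 2

/-- The time derivative of `energyDensity`, with the time derivative moved inside the gradient so
that Green's identity applies to `∇u · ∇∂ₜu`. -/
noncomputable def energyRate (c : (Fin n → ℝ) → ℝ) (u : ℝ → (Fin n → ℝ) → ℝ) (t : ℝ)
    (x : Fin n → ℝ) : ℝ :=
  2 * ((c x ^ 2)⁻¹ * timeDeriv (timeDeriv u) t x * timeDeriv u t x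
    + ∑ i, partialD (u t) i x * partialD (timeDeriv u t) i x)

lemma continuous_energyDensity (hc : Continuous c) (hc0 : ∀ x, c x ≠ 0)
    (hu : ContDiff ℝ 1 (uncurry u)) : Continuous (uncurry (energyDensity c u)) := by
  have hcinv : Continuous fun x => (c x ^ 2)⁻¹ := (hc.pow 2).inv₀ fun x => pow_ne_zero 2 (hc0 x)
  have hut := (contDiff_timeDeriv (m := 0) hu).continuous
  have hux (i : Fin n) := (contDiff_uncurry_partialD (m := 0) hu i).continuous
  exact ((hcinv.comp continuous_snd).mul (hut.pow 2)).add
    (continuous_finsetSum _ fun i _ => (hux i).pow 2)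

lemma continuous_energyRate (hc : Continuous c) (hc0 : ∀ x, c x ≠ 0)
    (hu : ContDiff ℝ 2 (uncurry u)) : Continuous (uncurry (energyRate c u)) := by
  have hcinv : Continuous fun x => (c x ^ 2)⁻¹ := (hc.pow 2).inv₀ fun x => pow_ne_zero 2 (hc0 x)
  have hut : ContDiff ℝ 1 (uncurry (timeDeriv u)) := contDiff_timeDeriv (m := 1) hu
  have hutt := (contDiff_timeDeriv (m := 0) hut).continuous
  have hux (i : Fin n) := (contDiff_uncurry_partialD (m := 1) hu i).continuous
  have hutx (i : Fin n) := (contDiff_uncurry_partialD (m := 0) hut i).continuous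
  exact ((((hcinv.comp continuous_snd).mul hutt).mul hut.continuous).add
    (continuous_finsetSum _ fun i _ => (hux i).mul (hutx i))).const_mul 2

lemma hasDerivAt_energyDensity (hu : ContDiff ℝ 2 (uncurry u)) (t : ℝ) (x : Fin n → ℝ) :
    HasDerivAt (fun s => energyDensity c u s x) (energyRate c u t x) t := by
  have hkinetic := ((hasDerivAt_timeDeriv
    ((contDiff_timeDeriv (m := 1) hu).differentiable one_ne_zero) t x).pow 2).const_mul
      ((c x ^ 2)⁻¹)
  have hpotential := HasDerivAt.fun_sum (u := Finset.univ) fun i _ => (hasDerivAt_timeDeriv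
    ((contDiff_uncurry_partialD (m := 1) hu i).differentiable one_ne_zero) t x).pow 2
  refine (hkinetic.add hpotential).congr_deriv ?_
  simp only [energyRate, timeDeriv_partialD hu, mul_add, Finset.mul_sum]
  congr 1
  · ring
  · exact Finset.sum_congr rfl fun i _ => by ring

lemma integral_energyRate (hc : Continuous c) (hc0 : ∀ x, c x ≠ 0)
    (hu : ContDiff ℝ 2 (uncurry u)) {t : ℝ} (hsupp : HasCompactSupport (timeDeriv u t)) :
    ∫ x, energyRate c u t x =
      2 * ∫ x, (c x ^ 2)⁻¹ * timeDeriv u t x *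
        (timeDeriv (timeDeriv u) t x - c x ^ 2 * laplacian (u t) x) := by
  have hcinv : Continuous fun x => (c x ^ 2)⁻¹ := (hc.pow 2).inv₀ fun x => pow_ne_zero 2 (hc0 x)
  have hut : ContDiff ℝ 1 (uncurry (timeDeriv u)) := contDiff_timeDeriv (m := 1) hu
  have hutt : Continuous (timeDeriv (timeDeriv u) t) :=
    (contDiff_timeDeriv (m := 0) hut).continuous.uncurry_left t
  have hslice : ContDiff ℝ 2 (u t) := hu.comp (contDiff_prodMk_right t)
  have hslice' : ContDiff ℝ 1 (timeDeriv u t) := hut.comp (contDiff_prodMk_right t)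
  have hkinetic := integrable_mul_of_hasCompactSupport (μ := volume)
    (f := fun x => (c x ^ 2)⁻¹ * timeDeriv (timeDeriv u) t x) (hcinv.mul hutt)
    hslice'.continuous hsupp
  have hlaplacian := integrable_mul_of_hasCompactSupport (μ := volume)
    (continuous_laplacian hslice) hslice'.continuous hsupp
  have hgrad := integrable_finsetSum (μ := volume) Finset.univ fun i _ => integrable_mul_partialD
    (contDiff_partialD (m := 1) hslice i).continuous hslice' hsupp i
  simp only [energyRate]
  rw [integral_const_mul, integral_add hkinetic hgrad,
    integral_sum_partialD_mul_partialD hslice hslice' hsupp, ← sub_eq_add_neg,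
    ← integral_sub hkinetic hlaplacian]
  congr! 3 with x
  have hcx := hc0 x
  field_simp

theorem energy_sub_energy (hc : Continuous c) (hc0 : ∀ x, c x ≠ 0)
    (hu : ContDiff ℝ 2 (uncurry u)) {K : Set (Fin n → ℝ)} (hK : IsCompact K) {a b : ℝ}
    (hab : a ≤ b) (hsupp : ∀ t ∈ Icc a b, Function.support (u t) ⊆ K) :
    energy c u b - energy c u a =
      2 * ∫ t in a..b, ∫ x, (c x ^ 2)⁻¹ * timeDeriv u t x *
        (timeDeriv (timeDeriv u) t x - c x ^ 2 * laplacian (u t) x) := by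
  rcases hab.eq_or_lt with rfl | hlt
  · simp
  have hdiff (x : Fin n → ℝ) : Differentiable ℝ fun t => u t x := fun t =>
    (hasDerivAt_timeDeriv (hu.differentiable two_ne_zero) t x).differentiableAt
  have hut (t) (ht : t ∈ Icc a b) (x) (hx : x ∉ K) : timeDeriv u t x = 0 := by
    have hzero : EqOn (fun t => u t x) (fun _ => 0) (Icc a b) :=
      fun s hs => Function.notMem_support.mp fun hxs => hx (hsupp s hs hxs)
    simpa [timeDeriv] using
      eqOn_deriv_of_uniqueDiffOn (uniqueDiffOn_Icc hlt) (hdiff x) (differentiable_const 0) hzero ht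
  have hux (t) (ht : t ∈ Icc a b) (x) (hx : x ∉ K) (i : Fin n) : partialD (u t) i x = 0 :=
    Function.notMem_support.mp fun hxt =>
      hx (closure_minimal (hsupp t ht) hK.isClosed (support_partialD_subset _ i hxt))
  calc energy c u b - energy c u a
    _ = ∫ t in a..b, ∫ x, energyRate c u t x :=
      integral_sub_integral_of_hasDerivAt hab hK
        (continuous_energyDensity hc hc0 (hu.of_le one_le_two)) (continuous_energyRate hc hc0 hu)
        (hasDerivAt_energyDensity hu)
        (fun t ht x hx => by simp [energyDensity, hut t ht x hx, hux t ht x hx])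
        (fun t ht x hx => by simp [energyRate, hut t ht x hx, hux t ht x hx])
    _ = _ := by
      rw [← intervalIntegral.integral_const_mul]
      exact intervalIntegral.integral_congr_Ioo_of_le hab fun t ht =>
        integral_energyRate hc hc0 hu (.intro hK (hut t (Ioo_subset_Icc_self ht)))

theorem energy_identity_fracWave_general (hc : Continuous c) (hc0 : ∀ x, c x ≠ 0)
    (hu : ContDiff ℝ 2 (uncurry u)) {K : Set (Fin n → ℝ)} (hK : IsCompact K) {a b : ℝ}
    (hab : a ≤ b) (hsupp : ∀ t ∈ Icc a b, Function.support (u t) ⊆ K)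
    {f : ℝ → (Fin n → ℝ) → ℝ}
    (hpde : ∀ t ∈ Ioo a b, ∀ x,
      timeDeriv (timeDeriv u) t x - c x ^ 2 * laplacian (u t) x + f t x = 0) :
    energy c u b =
      energy c u a - 2 * ∫ t in a..b, ∫ x, (c x ^ 2)⁻¹ * timeDeriv u t x * f t x := by
  have hdamping :
      ∫ t in a..b, ∫ x, (c x ^ 2)⁻¹ * timeDeriv u t x *
          (timeDeriv (timeDeriv u) t x - c x ^ 2 * laplacian (u t) x) =
        -∫ t in a..b, ∫ x, (c x ^ 2)⁻¹ * timeDeriv u t x * f t x := by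
    rw [← intervalIntegral.integral_neg]
    refine intervalIntegral.integral_congr_Ioo_of_le hab fun t ht => ?_
    simp only [eq_neg_of_add_eq_zero_left (hpde t ht _), mul_neg, integral_neg]
  have hbalance := energy_sub_energy hc hc0 hu hK hab hsupp
  rw [hdamping] at hbalance
  linarith

end Energy

/-- Energy identity for the fractionally attenuated wave equation:
`E(t) = E(0) − 2 ∫₀^t ∫ a c⁻² ∂_s u · ∂_s^α u dx ds` for all `t ∈ [0,T]`. -/
theorem energy_identity_fracWave {n : ℕ} (hn : 1 ≤ n) (α T : ℝ) (hα : α ∈ Ioo (0:ℝ) 1)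
    (hT : 0 < T) (c a : (Fin n → ℝ) → ℝ) (c₀ : ℝ) (hc₀ : 0 < c₀)
    (hc : ContDiff ℝ (⊤ : ℕ∞) c) (hcge : ∀ x, c₀ ≤ c x)
    (ha : ContDiff ℝ (⊤ : ℕ∞) a) (hage : ∀ x, 0 ≤ a x)
    (u : ℝ → (Fin n → ℝ) → ℝ)
    (hu : ContDiff ℝ (⊤ : ℕ∞) (fun p : ℝ × (Fin n → ℝ) => u p.1 p.2))
    (K : Set (Fin n → ℝ)) (hK : IsCompact K)
    (hsupp : ∀ t ∈ Icc (0:ℝ) T, Function.support (u t) ⊆ K)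
    (hpde : ∀ t ∈ Ioo (0:ℝ) T, ∀ x,
      deriv (fun s => deriv (fun r => u r x) s) t - (c x) ^ 2 * laplacian (u t) x
        + a x * caputo α (fun s => u s x) t = 0) :
    ∀ t ∈ Icc (0:ℝ) T,
      energy c u t = energy c u 0 -
        2 * ∫ s in (0:ℝ)..t, ∫ x, a x * ((c x) ^ 2)⁻¹ * deriv (fun r => u r x) s *
          caputo α (fun r => u r x) s := by
  intro t ht
  have hgeneral := energy_identity_fracWave_general hc.continuous
    (fun x => (hc₀.trans_le (hcge x)).ne') (mod_cast contDiff_infty.mp hu 2) hK ht.1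
    (fun s hs => hsupp s (Icc_subset_Icc_right ht.2 hs))
    fun s hs => hpde s (Ioo_subset_Ioo_right ht.2 hs)
  simpa only [timeDeriv, mul_comm, mul_left_comm, mul_assoc] using hgeneral
end

section
/- Weighted estimate for the fractional integral with a time-decreasing Carleman weight: let α ∈ (0,1), T > 0, τ ≥ 0, let φ : [0,T] → ℝ be continuous and nonincreasing, and let w : [0,T] → ℝ be measurable with ∫₀^T e^{2τφ(t)} |w(t)|² dt < ∞. Then ∫₀^T e^{2τφ(t)} | (1/Γ(1−α)) ∫₀^t (t−s)^{−α} w(s) ds |² dt ≤ (T^{1−α}/Γ(2−α))² · ∫₀^T e^{2τφ(t)} |w(t)|² dt. -/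
open MeasureTheory Set

/-- The fractional integral of order `1 - α`:
`I_{1-α} w (t) = (1/Γ(1-α)) ∫₀^t (t-s)^{-α} w(s) ds`. -/
noncomputable def fracInt (α : ℝ) (w : ℝ → ℝ) (t : ℝ) : ℝ :=
  (1 / Real.Gamma (1 - α)) * ∫ s in (0:ℝ)..t, (t - s) ^ (-α) * w s

/-!
On `(0, T)` the fractional integral is the convolution of `w` with the Abel kernel, whose total
mass on `(0, T)` is `C = T^{1-α} / Γ(2-α)`. Only earlier times `s < t` enter at time `t`, and
there the nonincreasing weight satisfies `ρ t ≤ ρ s`; so the weight moves under the integral over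
`s`, and the Schur test, with mass at most `C` in each of the two variables, bounds the weighted
`L^p` norm by `C` times that of `w`.
-/

open scoped ENNReal

section Schur

variable {X Y : Type*} [MeasurableSpace X] [MeasurableSpace Y] {μ : Measure X} {ν : Measure Y}
  {p : ℝ}

theorem rpow_lintegral_mul_le (hp : 1 ≤ p) {k f : Y → ℝ≥0∞} (hk : AEMeasurable k ν)
    (hf : AEMeasurable f ν) :
    (∫⁻ y, k y * f y ∂ν) ^ p ≤ (∫⁻ y, k y ∂ν) ^ (p - 1) * ∫⁻ y, k y * f y ^ p ∂ν := by
  have hp0 : 0 < p := by linarith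
  have hinv : 0 ≤ 1 - p⁻¹ := sub_nonneg.2 (inv_le_one_of_one_le₀ hp)
  have hsplit : ∀ y, k y ^ (1 - p⁻¹) * (k y * f y ^ p) ^ p⁻¹ = k y * f y := fun y => by
    rw [ENNReal.mul_rpow_of_nonneg _ _ (by positivity), ENNReal.rpow_rpow_inv hp0.ne', ← mul_assoc,
      ← ENNReal.rpow_add_of_nonneg _ _ hinv (by positivity), sub_add_cancel, ENNReal.rpow_one]
  have holder := ENNReal.lintegral_mul_norm_pow_le hk (hk.mul (hf.pow_const p)) hinv
    (inv_nonneg.2 hp0.le) (sub_add_cancel 1 p⁻¹)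
  simp only [Pi.mul_apply, hsplit] at holder
  refine (ENNReal.rpow_le_rpow holder hp0.le).trans_eq ?_
  rw [ENNReal.mul_rpow_of_nonneg _ _ hp0.le, ENNReal.rpow_inv_rpow hp0.ne', ← ENNReal.rpow_mul,
    sub_mul, one_mul, inv_mul_cancel₀ hp0.ne']

theorem lintegral_lintegral_kernel_mul_le [SFinite μ] [SFinite ν] {K : X → Y → ℝ≥0∞}
    (hK : Measurable (Function.uncurry K)) {g : Y → ℝ≥0∞} (hg : AEMeasurable g ν) {B : ℝ≥0∞}
    (hB : ∀ y, ∫⁻ x, K x y ∂μ ≤ B) :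
    ∫⁻ x, ∫⁻ y, K x y * g y ∂ν ∂μ ≤ B * ∫⁻ y, g y ∂ν := by
  rw [lintegral_lintegral_swap (hK.aemeasurable.mul hg.comp_snd),
    ← lintegral_const_mul'' B hg]
  refine lintegral_mono fun y => ?_
  rw [lintegral_mul_const _ hK.of_uncurry_right]
  gcongr
  exact hB y

theorem lintegral_mul_lintegral_rpow_le_of_schur [SFinite μ] [SFinite ν] (hp : 1 ≤ p)
    {K : X → Y → ℝ≥0∞} (hK : Measurable (Function.uncurry K)) {A B : ℝ≥0∞}
    (hA : ∀ x, ∫⁻ y, K x y ∂ν ≤ A) (hB : ∀ y, ∫⁻ x, K x y ∂μ ≤ B)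
    {ρ : X → ℝ≥0∞} {σ : Y → ℝ≥0∞} (hσ : AEMeasurable σ ν)
    (hρσ : ∀ᵐ x ∂μ, ∀ᵐ y ∂ν, K x y ≠ 0 → ρ x ≤ σ y) {f : Y → ℝ≥0∞} (hf : AEMeasurable f ν) :
    ∫⁻ x, ρ x * (∫⁻ y, K x y * f y ∂ν) ^ p ∂μ ≤
      A ^ (p - 1) * B * ∫⁻ y, σ y * f y ^ p ∂ν := by
  have hg : AEMeasurable (fun y => σ y * f y ^ p) ν := hσ.mul (hf.pow_const p)
  have pointwise : ∀ᵐ x ∂μ, ρ x * (∫⁻ y, K x y * f y ∂ν) ^ p ≤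
      A ^ (p - 1) * ∫⁻ y, K x y * (σ y * f y ^ p) ∂ν := by
    filter_upwards [hρσ] with x hx
    calc ρ x * (∫⁻ y, K x y * f y ∂ν) ^ p
        ≤ ρ x * ((∫⁻ y, K x y ∂ν) ^ (p - 1) * ∫⁻ y, K x y * f y ^ p ∂ν) := by
          gcongr
          exact rpow_lintegral_mul_le hp hK.of_uncurry_left.aemeasurable hf
      _ ≤ A ^ (p - 1) * (ρ x * ∫⁻ y, K x y * f y ^ p ∂ν) := by
          rw [mul_left_comm]
          gcongr
          exact hA x
      _ ≤ A ^ (p - 1) * ∫⁻ y, K x y * (σ y * f y ^ p) ∂ν := by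
          gcongr
          refine (lintegral_const_mul_le _ _).trans (lintegral_mono_ae ?_)
          filter_upwards [hx] with y hxy
          rcases eq_or_ne (K x y) 0 with h0 | h0
          · simp only [h0, zero_mul, mul_zero, le_refl]
          · rw [mul_left_comm]
            gcongr
            exact hxy h0
  have hinner : AEMeasurable (fun x => ∫⁻ y, K x y * (σ y * f y ^ p) ∂ν) μ :=
    (hK.aemeasurable.mul hg.comp_snd).lintegral_prod_right'
  refine (lintegral_mono_ae pointwise).trans ?_
  rw [lintegral_const_mul'' _ hinner, mul_assoc]
  gcongr
  exact lintegral_lintegral_kernel_mul_le hK hg hB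

end Schur

theorem setLIntegral_antitoneOn_mul_lintegral_sub_rpow_le {p : ℝ} (hp : 1 ≤ p) {k : ℝ → ℝ≥0∞}
    (hk : Measurable k) (hk_causal : ∀ x ≤ 0, k x = 0) {S : Set ℝ} (hS : MeasurableSet S)
    {ρ : ℝ → ℝ≥0∞} (hρ : AntitoneOn ρ S) {f : ℝ → ℝ≥0∞}
    (hf : AEMeasurable f (volume.restrict S)) :
    ∫⁻ t in S, ρ t * (∫⁻ s in S, k (t - s) * f s) ^ p ≤
      (∫⁻ x, k x) ^ p * ∫⁻ s in S, ρ s * f s ^ p := by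
  have hA : ∀ t, ∫⁻ s in S, k (t - s) ≤ ∫⁻ x, k x := fun t =>
    (setLIntegral_le_lintegral _ _).trans_eq (lintegral_sub_left_eq_self k t)
  have hB : ∀ s, ∫⁻ t in S, k (t - s) ≤ ∫⁻ x, k x := fun s =>
    (setLIntegral_le_lintegral _ _).trans_eq (lintegral_sub_right_eq_self k s)
  have hρ_le : ∀ᵐ t ∂volume.restrict S, ∀ᵐ s ∂volume.restrict S, k (t - s) ≠ 0 → ρ t ≤ ρ s := by
    filter_upwards [ae_restrict_mem hS] with t ht
    filter_upwards [ae_restrict_mem hS] with s hs hne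
    have hst : 0 < t - s := not_le.1 (mt (hk_causal _) hne)
    exact hρ hs ht (sub_pos.1 hst).le
  have hpow : (∫⁻ x, k x) ^ p = (∫⁻ x, k x) ^ (p - 1) * ∫⁻ x, k x := by
    simpa only [sub_add_cancel, ENNReal.rpow_one] using
      ENNReal.rpow_add_of_nonneg (x := ∫⁻ x, k x) (p - 1) 1 (sub_nonneg.2 hp) zero_le_one
  rw [hpow]
  exact lintegral_mul_lintegral_rpow_le_of_schur hp (K := fun t s => k (t - s))
    (hk.comp measurable_sub) hA hB (aemeasurable_restrict_of_antitoneOn hS hρ) hρ_le hf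

/-- The convolution kernel `x^{-α} / Γ(1-α)` of `fracInt α`. It is cut off to `(0, T)`, which makes
it integrable over `ℝ` without changing the convolution at times in `(0, T)`. -/
noncomputable def abelKernel (α T : ℝ) : ℝ → ℝ :=
  (Ioo 0 T).indicator fun x => x ^ (-α) / Real.Gamma (1 - α)

section AbelKernel

variable {α T : ℝ}

theorem measurable_abelKernel : Measurable (abelKernel α T) :=
  Measurable.indicator (by fun_prop) measurableSet_Ioo

theorem abelKernel_nonneg (hα : α < 1) (x : ℝ) : 0 ≤ abelKernel α T x :=
  indicator_nonneg (fun _ hx => div_nonneg (Real.rpow_nonneg hx.1.le _)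
    (Real.Gamma_nonneg_of_nonneg (sub_nonneg.2 hα.le))) x

theorem abelKernel_of_nonpos {x : ℝ} (hx : x ≤ 0) : abelKernel α T x = 0 :=
  indicator_of_notMem (fun h => hx.not_gt h.1) _

theorem integrable_abelKernel (hα : α < 1) : Integrable (abelKernel α T) := by
  refine IntegrableOn.integrable_indicator (Integrable.div_const ?_ _) measurableSet_Ioo
  rcases le_total 0 T with hT | hT
  · exact (intervalIntegrable_iff_integrableOn_Ioo_of_le hT).1
      (intervalIntegral.intervalIntegrable_rpow' (by linarith))
  · simp [Ioo_eq_empty_of_le hT]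

theorem integral_abelKernel (hα : α < 1) (hT : 0 ≤ T) :
    ∫ x, abelKernel α T x = T ^ (1 - α) / Real.Gamma (2 - α) := by
  have hα' : 0 < 1 - α := sub_pos.2 hα
  have hΓ : Real.Gamma (2 - α) = (1 - α) * Real.Gamma (1 - α) := by
    rw [← Real.Gamma_add_one hα'.ne']
    ring_nf
  have hpow : ∫ x in Ioo 0 T, x ^ (-α) = T ^ (1 - α) / (1 - α) := by
    rw [← integral_Ioc_eq_integral_Ioo, ← intervalIntegral.integral_of_le hT,
      integral_rpow (Or.inl (by linarith)), neg_add_eq_sub, Real.zero_rpow hα'.ne', sub_zero]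
  unfold abelKernel
  rw [integral_indicator measurableSet_Ioo, integral_div, hpow, hΓ, div_div]

theorem lintegral_enorm_abelKernel (hα : α < 1) (hT : 0 ≤ T) :
    ∫⁻ x, ‖abelKernel α T x‖ₑ = ENNReal.ofReal (T ^ (1 - α) / Real.Gamma (2 - α)) := by
  rw [← ofReal_integral_norm_eq_lintegral_enorm (integrable_abelKernel hα),
    ← integral_abelKernel hα hT]
  simp only [Real.norm_of_nonneg (abelKernel_nonneg hα _)]

end AbelKernel

section FracInt

variable {α T : ℝ} {w : ℝ → ℝ}

theorem fracInt_eq_setIntegral_abelKernel {t : ℝ} (ht : t ∈ Ioo 0 T) :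
    fracInt α w t = ∫ s in Ioo 0 T, abelKernel α T (t - s) * w s := by
  have hkernel : ∀ s ∈ Ioo 0 T, abelKernel α T (t - s) * w s =
      (Iio t).indicator (fun s => 1 / Real.Gamma (1 - α) * ((t - s) ^ (-α) * w s)) s := by
    intro s hs
    rcases lt_or_ge s t with hst | hst
    · rw [indicator_of_mem (show s ∈ Iio t from hst), abelKernel,
        indicator_of_mem (show t - s ∈ Ioo 0 T from ⟨sub_pos.2 hst, by linarith [hs.1, ht.2]⟩)]
      ring
    · rw [indicator_of_notMem (show s ∉ Iio t from hst.not_gt),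
        abelKernel_of_nonpos (sub_nonpos.2 hst), zero_mul]
  have hdomain : Ioo 0 T ∩ Iio t = Ioo 0 t := by
    rw [Ioo_inter_Iio, min_eq_right ht.2.le]
  rw [setIntegral_congr_fun measurableSet_Ioo hkernel, setIntegral_indicator measurableSet_Iio,
    hdomain, integral_const_mul, fracInt, intervalIntegral.integral_of_le ht.1.le,
    integral_Ioc_eq_integral_Ioo]

theorem enorm_fracInt_le {t : ℝ} (ht : t ∈ Ioo 0 T) :
    ‖fracInt α w t‖ₑ ≤ ∫⁻ s in Ioo 0 T, ‖abelKernel α T (t - s)‖ₑ * ‖w s‖ₑ := by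
  rw [fracInt_eq_setIntegral_abelKernel ht]
  simpa only [enorm_mul] using enorm_integral_le_lintegral_enorm
    (μ := volume.restrict (Ioo 0 T)) (fun s => abelKernel α T (t - s) * w s)

theorem aestronglyMeasurable_fracInt (hw : AEStronglyMeasurable w (volume.restrict (Ioo 0 T))) :
    AEStronglyMeasurable (fracInt α w) (volume.restrict (Ioo 0 T)) := by
  have hintegrand : AEStronglyMeasurable (fun q : ℝ × ℝ => abelKernel α T (q.1 - q.2) * w q.2)
      ((volume.restrict (Ioo 0 T)).prod (volume.restrict (Ioo 0 T))) :=
    (measurable_abelKernel.comp measurable_sub).aestronglyMeasurable.mul hw.comp_snd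
  refine hintegrand.integral_prod_right'.congr ?_
  filter_upwards [ae_restrict_mem measurableSet_Ioo] with t ht
  exact (fracInt_eq_setIntegral_abelKernel ht).symm

theorem setLIntegral_antitoneOn_mul_enorm_fracInt_rpow_le (hα : α < 1) (hT : 0 ≤ T) {p : ℝ}
    (hp : 1 ≤ p) {ρ : ℝ → ℝ≥0∞} (hρ : AntitoneOn ρ (Ioo 0 T))
    (hw : AEStronglyMeasurable w (volume.restrict (Ioo 0 T))) :
    ∫⁻ t in Ioo 0 T, ρ t * ‖fracInt α w t‖ₑ ^ p ≤
      ENNReal.ofReal (T ^ (1 - α) / Real.Gamma (2 - α)) ^ p *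
        ∫⁻ t in Ioo 0 T, ρ t * ‖w t‖ₑ ^ p := by
  rw [← lintegral_enorm_abelKernel hα hT]
  refine le_trans (setLIntegral_mono' measurableSet_Ioo fun t ht => ?_)
    (setLIntegral_antitoneOn_mul_lintegral_sub_rpow_le hp measurable_abelKernel.enorm
      (fun x hx => by rw [abelKernel_of_nonpos hx, enorm_zero]) measurableSet_Ioo hρ hw.enorm)
  gcongr
  exact enorm_fracInt_le ht

theorem fracInt_weighted_estimate_general (hα : α < 1) (hT : 0 ≤ T) {p : ℝ} (hp : 1 ≤ p)
    {ρ : ℝ → ℝ} (hρ_nonneg : ∀ t ∈ Ioo 0 T, 0 ≤ ρ t) (hρ : AntitoneOn ρ (Ioo 0 T))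
    (hw_meas : AEStronglyMeasurable w (volume.restrict (Ioo 0 T)))
    (hw : IntegrableOn (fun t => ρ t * |w t| ^ p) (Ioo 0 T)) :
    IntegrableOn (fun t => ρ t * |fracInt α w t| ^ p) (Ioo 0 T) ∧
      ∫ t in Ioo 0 T, ρ t * |fracInt α w t| ^ p ≤
        (T ^ (1 - α) / Real.Gamma (2 - α)) ^ p * ∫ t in Ioo 0 T, ρ t * |w t| ^ p := by
  have hC : 0 ≤ T ^ (1 - α) / Real.Gamma (2 - α) :=
    div_nonneg (Real.rpow_nonneg hT _) (Real.Gamma_nonneg_of_nonneg (by linarith))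
  have hp0 : 0 ≤ p := by linarith
  have hofReal : ∀ u : ℝ → ℝ, ∫⁻ t in Ioo 0 T, ENNReal.ofReal (ρ t * |u t| ^ p) =
      ∫⁻ t in Ioo 0 T, ENNReal.ofReal (ρ t) * ‖u t‖ₑ ^ p := fun u =>
    setLIntegral_congr_fun measurableSet_Ioo fun t ht => by
      simp only [ENNReal.ofReal_mul (hρ_nonneg t ht), Real.enorm_eq_ofReal_abs,
        ENNReal.ofReal_rpow_of_nonneg (abs_nonneg _) hp0]
  have hnonneg : ∀ u : ℝ → ℝ, 0 ≤ᵐ[volume.restrict (Ioo 0 T)] fun t => ρ t * |u t| ^ p := fun u =>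
    (ae_restrict_mem measurableSet_Ioo).mono fun t ht =>
      mul_nonneg (hρ_nonneg t ht) (Real.rpow_nonneg (abs_nonneg _) _)
  have hbound : ∫⁻ t in Ioo 0 T, ENNReal.ofReal (ρ t * |fracInt α w t| ^ p) ≤
      ENNReal.ofReal
        ((T ^ (1 - α) / Real.Gamma (2 - α)) ^ p * ∫ t in Ioo 0 T, ρ t * |w t| ^ p) := by
    rw [ENNReal.ofReal_mul (Real.rpow_nonneg hC p), ← ENNReal.ofReal_rpow_of_nonneg hC hp0,
      ofReal_integral_eq_lintegral_ofReal hw (hnonneg w), hofReal, hofReal]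
    exact setLIntegral_antitoneOn_mul_enorm_fracInt_rpow_le hα hT hp
      (ENNReal.ofReal_mono.comp_antitoneOn hρ) hw_meas
  have hmeas : AEStronglyMeasurable (fun t => ρ t * |fracInt α w t| ^ p)
      (volume.restrict (Ioo 0 T)) :=
    ((aemeasurable_restrict_of_antitoneOn measurableSet_Ioo hρ).mul
      ((aestronglyMeasurable_fracInt hw_meas).aemeasurable.abs.pow_const p)).aestronglyMeasurable
  refine ⟨⟨hmeas, ?_⟩, ?_⟩
  · rw [hasFiniteIntegral_iff_ofReal (hnonneg _)]
    exact hbound.trans_lt ENNReal.ofReal_lt_top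
  · rw [integral_eq_lintegral_of_nonneg_ae (hnonneg _) hmeas]
    exact ENNReal.toReal_le_of_le_ofReal (mul_nonneg (Real.rpow_nonneg hC p)
      (integral_nonneg_of_ae (hnonneg w))) hbound

end FracInt

/-- Weighted estimate for the fractional integral with a time-decreasing Carleman weight:
`∫₀^T e^{2τφ} |I_{1-α}w|² ≤ (T^{1-α}/Γ(2-α))² ∫₀^T e^{2τφ} |w|²`. -/
theorem fracInt_weighted_estimate (α T τ : ℝ) (hα : α ∈ Ioo (0:ℝ) 1) (hT : 0 < T)
    (hτ : 0 ≤ τ) (φ : ℝ → ℝ) (hφcont : ContinuousOn φ (Icc 0 T))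
    (hφmono : AntitoneOn φ (Icc 0 T))
    (w : ℝ → ℝ) (hw_meas : Measurable w)
    (hw : IntegrableOn (fun t => Real.exp (2 * τ * φ t) * (w t) ^ 2) (Ioo 0 T)) :
    ∫ t in Ioo (0:ℝ) T, Real.exp (2 * τ * φ t) * (fracInt α w t) ^ 2 ≤
      (T ^ (1 - α) / Real.Gamma (2 - α)) ^ 2 *
        ∫ t in Ioo (0:ℝ) T, Real.exp (2 * τ * φ t) * (w t) ^ 2 := by
  have hweight : AntitoneOn (fun t => Real.exp (2 * τ * φ t)) (Ioo 0 T) := fun s hs t ht hst =>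
    Real.exp_le_exp.2 (mul_le_mul_of_nonneg_left
      (hφmono (Ioo_subset_Icc_self hs) (Ioo_subset_Icc_self ht) hst) (by positivity))
  simpa only [Real.rpow_two, sq_abs] using (fracInt_weighted_estimate_general hα.2 hT.le
    one_le_two (fun t _ => (Real.exp_pos _).le) hweight hw_meas.aestronglyMeasurable
    (by simpa only [Real.rpow_two, sq_abs] using hw)).2
end
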